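/- arXiv:2403.19494 — 2 statements merged into one kernel-verified Lean document; each statement's English description precedes it below -/
import Mathlib

section
/- (Theorem 5.1, conditional form: single-expert single-stage bound.) Assume the pointwise Γ-consistency hypothesis holds with Γ(t) = β·t^α for some α ∈ (0,1] and β > 0. Then for every L ∈ A and every s ∈ S, D(L,s) − D* ≤ Γ̄(C_Φ(L,s) − inf{C_Φ(L',s') : L' ∈ A, s' ∈ S}), where Γ̄(t) = max{ t, (l̄ + c̄_max)^{1−α}·β·t^α }. -/
/-- Conditional deferral error `D(L,s) = L·1_{s>0} + c̄·1_{s≤0}`. -/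
noncomputable def DcondBin (cbar : ℝ) (L : ℝ) (s : ℝ) : ℝ :=
  (if 0 < s then L else 0) + (if s ≤ 0 then cbar else 0)

/-- Conditional surrogate error `C_Φ(L,s) = c̄·Φ(s) + L·Φ(−s)`. -/
noncomputable def CcondBin (cbar : ℝ) (Φ : ℝ → ℝ) (L : ℝ) (s : ℝ) : ℝ :=
  cbar * Φ s + L * Φ (-s)

/-!
The conditional errors `D` and `C_Φ` are homogeneous in the pair of costs `(L, c̄)`, and on the
simplex `(L, c̄) = (1 - p, p)` they are the binary zero-one and surrogate conditional errors.
Rescaling the pointwise consistency bound by `q = L + c̄` therefore bounds the deferral regret at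
a fixed `L` by `q Γ(t / q)`, where `t` is the surrogate excess; for concave `Γ` with `Γ 0 ≥ 0` this
is nondecreasing in `q`. If `s` makes the better of the two decisions for `(c̄₀, c̄)`, the only
regret left is that of `L` against `c̄₀`, incurred when `s > 0` and at most `t` as `Φ(-s) ≥ 1`.
Otherwise the rescaled bound applies: at `L` itself if `s > 0`, and at `c̄₀` if `s ≤ 0`.
-/

section ConditionalErrors

variable {c L l k s t : ℝ} {Φ : ℝ → ℝ} {A S : Set ℝ}

theorem dcondBin_of_pos (hs : 0 < s) : DcondBin c L s = L := by
  simp [DcondBin, hs, not_le.2 hs]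

theorem dcondBin_of_nonpos (hs : s ≤ 0) : DcondBin c L s = c := by
  simp [DcondBin, hs, not_lt.2 hs]

theorem dcondBin_div_div : DcondBin (c / k) (L / k) s = DcondBin c L s / k := by
  rcases lt_or_ge 0 s with hs | hs
  · simp only [dcondBin_of_pos hs]
  · simp only [dcondBin_of_nonpos hs]

theorem ccondBin_div_div : CcondBin (c / k) Φ (L / k) s = CcondBin c Φ L s / k := by
  simp only [CcondBin]
  ring

theorem ccondBin_nonneg (hΦ : ∀ u, 0 ≤ Φ u) (hc : 0 ≤ c) (hL : 0 ≤ L) : 0 ≤ CcondBin c Φ L s :=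
  add_nonneg (mul_nonneg hc (hΦ _)) (mul_nonneg hL (hΦ _))

theorem ccondBin_le_ccondBin (hΦ : 0 ≤ Φ (-s)) (hlL : l ≤ L) :
    CcondBin c Φ l s ≤ CcondBin c Φ L s :=
  add_le_add_right (mul_le_mul_of_nonneg_right hlL hΦ) _

theorem sub_le_of_ccondBin_le_add (hΦ : 1 ≤ Φ (-s)) (hlL : l ≤ L)
    (h : CcondBin c Φ L s ≤ CcondBin c Φ l s + t) : L - l ≤ t :=
  calc L - l ≤ (L - l) * Φ (-s) := le_mul_of_one_le_right (sub_nonneg.2 hlL) hΦ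
    _ = CcondBin c Φ L s - CcondBin c Φ l s := by simp only [CcondBin]; ring
    _ ≤ t := sub_le_iff_le_add'.2 h

theorem le_ccondBin_of_mem_closure {a : ℝ} (h : ∀ L ∈ A, a ≤ CcondBin c Φ L s)
    (hl : l ∈ closure A) : a ≤ CcondBin c Φ l s := by
  have hclosed : IsClosed {L | a ≤ CcondBin c Φ L s} :=
    isClosed_le continuous_const (by unfold CcondBin; fun_prop)
  exact closure_minimal h hclosed hl

theorem isLeast_dcondBin (hSpos : ∃ s ∈ S, 0 < s) (hSnonpos : ∃ s ∈ S, s ≤ 0) :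
    IsLeast {v | ∃ s ∈ S, v = DcondBin c L s} (min L c) := by
  constructor
  · rcases min_choice L c with h | h
    · obtain ⟨s, hsS, hs⟩ := hSpos
      exact ⟨s, hsS, by rw [h, dcondBin_of_pos hs]⟩
    · obtain ⟨s, hsS, hs⟩ := hSnonpos
      exact ⟨s, hsS, by rw [h, dcondBin_of_nonpos hs]⟩
  · rintro _ ⟨s, -, rfl⟩
    rcases lt_or_ge 0 s with hs | hs
    · exact (min_le_left L c).trans_eq (dcondBin_of_pos hs).symm
    · exact (min_le_right L c).trans_eq (dcondBin_of_nonpos hs).symm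

theorem sInf_ccondBin_le (hΦ : ∀ u, 0 ≤ Φ u) (hc : 0 ≤ c) (hA : ∀ L ∈ A, 0 ≤ L)
    (hL : L ∈ A) (hs : s ∈ S) :
    sInf {v | ∃ L' ∈ A, ∃ s' ∈ S, v = CcondBin c Φ L' s'} ≤ CcondBin c Φ L s := by
  refine csInf_le ⟨0, ?_⟩ ⟨L, hL, s, hs, rfl⟩
  rintro _ ⟨L', hL', s', -, rfl⟩
  exact ccondBin_nonneg hΦ hc (hA L' hL')

end ConditionalErrors

section Perspective

theorem mul_map_div_le_of_concaveOn {Γ : ℝ → ℝ} (hΓ : ConcaveOn ℝ (Set.Ici 0) Γ) (hΓ0 : 0 ≤ Γ 0)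
    {q M t : ℝ} (hq : 0 < q) (hqM : q ≤ M) (ht : 0 ≤ t) : q * Γ (t / q) ≤ M * Γ (t / M) := by
  have hM : 0 < M := hq.trans_le hqM
  have hweight : 0 ≤ 1 - q / M := sub_nonneg.2 ((div_le_one hM).2 hqM)
  have hconcave : q / M * Γ (t / q) + (1 - q / M) * Γ 0 ≤ Γ (t / M) := by
    have hmix : q / M * (t / q) + (1 - q / M) * 0 = t / M := by field_simp; ring
    rw [← hmix]
    exact hΓ.2 (div_nonneg ht hq.le) Set.self_mem_Ici (by positivity) hweight (by ring)
  calc q * Γ (t / q) = M * (q / M * Γ (t / q)) := by field_simp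
    _ ≤ M * Γ (t / M) := by
      gcongr
      exact (le_add_of_nonneg_right (mul_nonneg hweight hΓ0)).trans hconcave

theorem mul_const_mul_div_rpow {M t : ℝ} (hM : 0 < M) (ht : 0 ≤ t) (β α : ℝ) :
    M * (β * (t / M) ^ α) = M ^ (1 - α) * β * t ^ α := by
  rw [Real.div_rpow ht hM.le, Real.rpow_sub hM, Real.rpow_one]
  ring

theorem monotoneOn_const_mul_rpow {α β : ℝ} (hα : 0 ≤ α) (hβ : 0 ≤ β) :
    MonotoneOn (fun t : ℝ => β * t ^ α) (Set.Ici 0) :=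
  fun _ hx _ _ hxy => mul_le_mul_of_nonneg_left (Real.rpow_le_rpow hx hxy hα) hβ

theorem concaveOn_const_mul_rpow {α β : ℝ} (hα : α ∈ Set.Icc 0 1) (hβ : 0 ≤ β) :
    ConcaveOn ℝ (Set.Ici 0) (fun t : ℝ => β * t ^ α) :=
  (Real.concaveOn_rpow hα.1 hα.2).smul hβ

end Perspective

/-- Pointwise `Γ`-consistency of the margin loss `Φ` over the scores `S`: the binary zero-one regret
is at most `Γ` of the surrogate regret, whatever the conditional probability `p` of the positive
label. This is the hypothesis that transfers binary classification guarantees to deferral. -/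
def IsPointwiseConsistent (S : Set ℝ) (Φ Γ : ℝ → ℝ) : Prop :=
  ∀ p ∈ Set.Icc (0 : ℝ) 1, ∀ s ∈ S,
    (p * (if s ≤ 0 then (1 : ℝ) else 0) + (1 - p) * (if 0 < s then (1 : ℝ) else 0))
        - sInf {v | ∃ s' ∈ S,
            v = p * (if s' ≤ 0 then (1 : ℝ) else 0)
              + (1 - p) * (if 0 < s' then (1 : ℝ) else 0)}
      ≤ Γ ((p * Φ s + (1 - p) * Φ (-s))
          - sInf {v | ∃ s' ∈ S, v = p * Φ s' + (1 - p) * Φ (-s')})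

theorem zeroOne_eq_dcondBin (p s : ℝ) :
    p * (if s ≤ 0 then (1 : ℝ) else 0) + (1 - p) * (if 0 < s then (1 : ℝ) else 0)
      = DcondBin p (1 - p) s := by
  simp only [DcondBin, mul_ite, mul_one, mul_zero, add_comm]

namespace IsPointwiseConsistent

variable {S : Set ℝ} {Φ Γ : ℝ → ℝ} {s t : ℝ}

theorem dcondBin_sub_min_le_of_mem_Icc (hcons : IsPointwiseConsistent S Φ Γ)
    (hΓmono : MonotoneOn Γ (Set.Ici 0))
    (hSpos : ∃ s ∈ S, 0 < s) (hSnonpos : ∃ s ∈ S, s ≤ 0) {p : ℝ} (hp : p ∈ Set.Icc 0 1)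
    (hs : s ∈ S) (ht : ∀ s' ∈ S, CcondBin p Φ (1 - p) s ≤ CcondBin p Φ (1 - p) s' + t) :
    DcondBin p (1 - p) s - min (1 - p) p ≤ Γ t := by
  set V := {v | ∃ s' ∈ S, v = CcondBin p Φ (1 - p) s'}
  have hlower : CcondBin p Φ (1 - p) s - t ∈ lowerBounds V := by
    rintro _ ⟨s', hs', rfl⟩
    exact sub_le_iff_le_add.2 (ht s' hs')
  have hsV : CcondBin p Φ (1 - p) s ∈ V := ⟨s, hs, rfl⟩
  have hexcess_nonneg : 0 ≤ CcondBin p Φ (1 - p) s - sInf V :=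
    sub_nonneg.2 (csInf_le ⟨_, hlower⟩ hsV)
  have hexcess_le : CcondBin p Φ (1 - p) s - sInf V ≤ t := sub_le_comm.1 (le_csInf ⟨_, hsV⟩ hlower)
  have hregret := hcons p hp s hs
  simp only [zeroOne_eq_dcondBin, (isLeast_dcondBin hSpos hSnonpos).csInf_eq] at hregret
  exact hregret.trans (hΓmono hexcess_nonneg (hexcess_nonneg.trans hexcess_le) hexcess_le)

theorem dcondBin_sub_min_le (hcons : IsPointwiseConsistent S Φ Γ)
    (hΓmono : MonotoneOn Γ (Set.Ici 0))
    (hSpos : ∃ s ∈ S, 0 < s) (hSnonpos : ∃ s ∈ S, s ≤ 0) {c L : ℝ} (hc : 0 ≤ c) (hL : 0 ≤ L)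
    (hq : 0 < L + c) (hs : s ∈ S) (ht : ∀ s' ∈ S, CcondBin c Φ L s ≤ CcondBin c Φ L s' + t) :
    DcondBin c L s - min L c ≤ (L + c) * Γ (t / (L + c)) := by
  have hp : c / (L + c) ∈ Set.Icc (0 : ℝ) 1 :=
    ⟨by positivity, (div_le_one hq).2 (le_add_of_nonneg_left hL)⟩
  have hL' : 1 - c / (L + c) = L / (L + c) := by
    rw [one_sub_div hq.ne', add_sub_cancel_right]
  have hsimplex := hcons.dcondBin_sub_min_le_of_mem_Icc hΓmono hSpos hSnonpos hp hs
    (t := t / (L + c)) fun s' hs' => by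
      rw [hL', ccondBin_div_div, ccondBin_div_div, ← add_div]
      exact div_le_div_of_nonneg_right (ht s' hs') hq.le
  rw [hL', dcondBin_div_div, min_div_div_right hq.le, ← sub_div] at hsimplex
  exact (div_le_iff₀' hq).1 hsimplex

theorem dcondBin_sub_min_le_of_add_le (hcons : IsPointwiseConsistent S Φ Γ)
    (hΓmono : MonotoneOn Γ (Set.Ici 0)) (hΓconc : ConcaveOn ℝ (Set.Ici 0) Γ) (hΓ0 : 0 ≤ Γ 0)
    (hSpos : ∃ s ∈ S, 0 < s) (hSnonpos : ∃ s ∈ S, s ≤ 0) {c L M : ℝ} (hc : 0 ≤ c) (hL : 0 ≤ L)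
    (hq : 0 < L + c) (hM : L + c ≤ M) (hs : s ∈ S)
    (ht : ∀ s' ∈ S, CcondBin c Φ L s ≤ CcondBin c Φ L s' + t) :
    DcondBin c L s - min L c ≤ M * Γ (t / M) :=
  (hcons.dcondBin_sub_min_le hΓmono hSpos hSnonpos hc hL hq hs ht).trans
    (mul_map_div_le_of_concaveOn hΓconc hΓ0 hq hM ((le_add_iff_nonneg_right _).1 (ht s hs)))

theorem dcondBin_sub_min_sInf_le (hcons : IsPointwiseConsistent S Φ Γ)
    (hΓmono : MonotoneOn Γ (Set.Ici 0)) (hΓconc : ConcaveOn ℝ (Set.Ici 0) Γ) (hΓ0 : 0 ≤ Γ 0)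
    (hSpos : ∃ s ∈ S, 0 < s) (hSnonpos : ∃ s ∈ S, s ≤ 0)
    (hΦ0 : ∀ u, 0 ≤ Φ u) (hΦ1 : ∀ u ≤ 0, 1 ≤ Φ u) {A : Set ℝ} {c L M : ℝ} (hc : 0 ≤ c)
    (hA0 : ∀ L' ∈ A, 0 ≤ L') (hL : L ∈ A) (hM : L + c ≤ M) (hs : s ∈ S)
    (ht : ∀ L' ∈ A, ∀ s' ∈ S, CcondBin c Φ L s ≤ CcondBin c Φ L' s' + t) :
    DcondBin c L s - min (sInf A) c ≤ max t (M * Γ (t / M)) := by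
  have hAbdd : BddBelow A := ⟨0, hA0⟩
  have hinf_nonneg : 0 ≤ sInf A := Real.sInf_nonneg hA0
  have hinf_le : sInf A ≤ L := csInf_le hAbdd hL
  have ht_inf : ∀ s' ∈ S, CcondBin c Φ L s ≤ CcondBin c Φ (sInf A) s' + t := fun s' hs' =>
    sub_le_iff_le_add.1 <| le_ccondBin_of_mem_closure
      (fun L' hL' => sub_le_iff_le_add.2 (ht L' hL' s' hs')) (csInf_mem_closure ⟨L, hL⟩ hAbdd)
  rcases lt_or_ge 0 s with hpredict | hdefer
  · rcases le_or_gt (sInf A) c with hcheap | hcostly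
    · rw [dcondBin_of_pos hpredict, min_eq_left hcheap]
      exact le_max_of_le_left <| sub_le_of_ccondBin_le_add
        (hΦ1 (-s) (neg_nonpos.2 hpredict.le)) hinf_le (ht_inf s hs)
    · have hbound := hcons.dcondBin_sub_min_le_of_add_le hΓmono hΓconc hΓ0 hSpos hSnonpos hc
        (hA0 L hL) (by linarith) hM hs (ht L hL)
      rw [min_eq_right (hcostly.le.trans hinf_le)] at hbound
      rw [min_eq_right hcostly.le]
      exact le_max_of_le_right hbound
  · rcases le_or_gt c (sInf A) with hcheap | hcostly
    · rw [dcondBin_of_nonpos hdefer, min_eq_right hcheap, sub_self]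
      exact le_max_of_le_left ((le_add_iff_nonneg_right _).1 (ht L hL s hs))
    · have hbound := hcons.dcondBin_sub_min_le_of_add_le hΓmono hΓconc hΓ0 hSpos hSnonpos hc
        hinf_nonneg (by linarith) ((add_le_add_left hinf_le c).trans hM) hs fun s' hs' =>
          (ccondBin_le_ccondBin (hΦ0 (-s)) hinf_le).trans (ht_inf s' hs')
      rw [dcondBin_of_nonpos hdefer] at hbound ⊢
      exact le_max_of_le_right hbound

end IsPointwiseConsistent

theorem single_expert_single_stage_conditional_bound_general
    (lbar cbarmax : ℝ) (A : Set ℝ) (hAsub : A ⊆ Set.Icc 0 lbar)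
    (cbar : ℝ) (hcbar : cbar ∈ Set.Icc 0 cbarmax)
    (S : Set ℝ) (hSpos : ∃ s ∈ S, 0 < s) (hSnonpos : ∃ s ∈ S, s ≤ 0)
    (Φ : ℝ → ℝ) (hΦ0 : ∀ u, 0 ≤ Φ u)
    (hΦ1 : ∀ u : ℝ, (if u ≤ 0 then (1 : ℝ) else 0) ≤ Φ u)
    (Γ : ℝ → ℝ) (hΓmono : MonotoneOn Γ (Set.Ici 0)) (hΓconc : ConcaveOn ℝ (Set.Ici 0) Γ)
    (hΓ0 : 0 ≤ Γ 0) (hcons : IsPointwiseConsistent S Φ Γ)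
    (L : ℝ) (hL : L ∈ A) (s : ℝ) (hs : s ∈ S) :
    DcondBin cbar L s - min (sInf A) cbar ≤
      max (CcondBin cbar Φ L s - sInf {v | ∃ L' ∈ A, ∃ s' ∈ S, v = CcondBin cbar Φ L' s'})
        ((lbar + cbarmax)
          * Γ ((CcondBin cbar Φ L s
              - sInf {v | ∃ L' ∈ A, ∃ s' ∈ S, v = CcondBin cbar Φ L' s'}) / (lbar + cbarmax))) := by
  have hA0 : ∀ L' ∈ A, 0 ≤ L' := fun L' hL' => (hAsub hL').1
  have hΦ_one_le : ∀ u ≤ 0, 1 ≤ Φ u := fun u hu => (if_pos hu).symm.trans_le (hΦ1 u)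
  refine hcons.dcondBin_sub_min_sInf_le hΓmono hΓconc hΓ0 hSpos hSnonpos hΦ0 hΦ_one_le hcbar.1 hA0
    hL (add_le_add (hAsub hL).2 hcbar.2) hs fun L' hL' s' hs' => ?_
  rw [← sub_le_iff_le_add, sub_sub_cancel]
  exact sInf_ccondBin_le hΦ0 hcbar.1 hA0 hL' hs'

/-- Theorem 5.1, conditional form: single-expert single-stage bound. -/
theorem single_expert_single_stage_conditional_bound
    (lbar cbarmax : ℝ) (hlbar : 0 < lbar) (hcbarmax : 0 < cbarmax)
    (A : Set ℝ) (hA : A.Nonempty) (hAsub : A ⊆ Set.Icc 0 lbar)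
    (cbar : ℝ) (hcbar : cbar ∈ Set.Icc 0 cbarmax)
    (S : Set ℝ) (hSpos : ∃ s ∈ S, 0 < s) (hSnonpos : ∃ s ∈ S, s ≤ 0)
    (Φ : ℝ → ℝ) (hΦ0 : ∀ u, 0 ≤ Φ u)
    (hΦ1 : ∀ u : ℝ, (if u ≤ 0 then (1 : ℝ) else 0) ≤ Φ u)
    (α β : ℝ) (hα : α ∈ Set.Ioc (0 : ℝ) 1) (hβ : 0 < β)
    (hcons : ∀ p ∈ Set.Icc (0 : ℝ) 1, ∀ s ∈ S,
      (p * (if s ≤ 0 then (1 : ℝ) else 0) + (1 - p) * (if 0 < s then (1 : ℝ) else 0))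
          - sInf {v | ∃ s' ∈ S,
              v = p * (if s' ≤ 0 then (1 : ℝ) else 0)
                + (1 - p) * (if 0 < s' then (1 : ℝ) else 0)}
        ≤ β * ((p * Φ s + (1 - p) * Φ (-s))
            - sInf {v | ∃ s' ∈ S, v = p * Φ s' + (1 - p) * Φ (-s')}) ^ α)
    (L : ℝ) (hL : L ∈ A) (s : ℝ) (hs : s ∈ S) :
    DcondBin cbar L s - min (sInf A) cbar ≤
      max (CcondBin cbar Φ L s - sInf {v | ∃ L' ∈ A, ∃ s' ∈ S, v = CcondBin cbar Φ L' s'})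
        ((lbar + cbarmax) ^ (1 - α) * β
          * (CcondBin cbar Φ L s
              - sInf {v | ∃ L' ∈ A, ∃ s' ∈ S, v = CcondBin cbar Φ L' s'}) ^ α) := by
  rw [← mul_const_mul_div_rpow (add_pos hlbar hcbarmax) (sub_nonneg.2 <|
    sInf_ccondBin_le hΦ0 hcbar.1 (fun L' hL' => (hAsub hL').1) hL hs)]
  exact single_expert_single_stage_conditional_bound_general lbar cbarmax A hAsub cbar hcbar S
    hSpos hSnonpos Φ hΦ0 hΦ1 (fun t => β * t ^ α) (monotoneOn_const_mul_rpow hα.1.le hβ.le)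
    (concaveOn_const_mul_rpow ⟨hα.1.le, hα.2⟩ hβ.le) (by simp [hα.1.ne']) hcons L hL s hs
end

section
/- (Theorem 5.3, conditional form: single-expert two-stage bound.) Assume the pointwise Γ-consistency hypothesis holds with Γ(t) = β·t^α for some α ∈ (0,1] and β > 0. Then for every L ∈ A and every s ∈ S, D(L,s) − D* ≤ (L − c̄_0) + (l̄ + c̄_max)^{1−α}·β·(C_Φ(L,s) − inf_{s'∈S} C_Φ(L,s'))^α. -/
/-!
Both `D` and `C_Φ` are homogeneous of degree one in the pair of costs `(c̄, L)`. With `T = c̄ + L`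
and `p = c̄ / T`, the costs are `T` times the probability weights `(p, 1 - p)`, for which the regret
of `D` is the zero-one regret controlled by the consistency hypothesis. Scaling back turns
`T · β · t ^ α` into `T ^ (1 - α) · β · (T · t) ^ α`. Replacing `L` by the best predictor error in
`D* = min c̄₀ c̄` costs at most `L - c̄₀`.
-/

section Regret

variable {X : Type*} {S : Set X} {f : X → ℝ} {x : X}

/-- The regret of `x` for the objective `f`: the excess of `f x` over the infimum of `f` on `S`.
The values of `f` are collected in a set-builder rather than as `f '' S` so that the definition
unfolds to the shape of the infima in `single_expert_two_stage_conditional_bound`. -/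
noncomputable def regret (S : Set X) (f : X → ℝ) (x : X) : ℝ :=
  f x - sInf {v | ∃ y ∈ S, v = f y}

lemma regret_eq_sub_sInf_image (S : Set X) (f : X → ℝ) (x : X) :
    regret S f x = f x - sInf (f '' S) := by
  simp only [regret, Set.image, eq_comm]

lemma regret_nonneg (hf : BddBelow (f '' S)) (hx : x ∈ S) : 0 ≤ regret S f x := by
  rw [regret_eq_sub_sInf_image, sub_nonneg]
  exact csInf_le hf (Set.mem_image_of_mem f hx)

lemma regret_const_mul {t : ℝ} (ht : 0 ≤ t) (S : Set X) (f : X → ℝ) (x : X) :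
    regret S (fun y ↦ t * f y) x = t * regret S f x := by
  simp only [regret_eq_sub_sInf_image, sInf_image', ← Real.mul_iInf_of_nonneg ht, mul_sub]

end Regret

section ConditionalErrors

variable {S : Set ℝ} {Φ : ℝ → ℝ} {c L s t : ℝ}

lemma DcondBin_of_pos (c L : ℝ) (hs : 0 < s) : DcondBin c L s = L := by
  simp [DcondBin, hs, hs.not_ge]

lemma DcondBin_of_nonpos (c L : ℝ) (hs : s ≤ 0) : DcondBin c L s = c := by
  simp [DcondBin, hs, hs.not_gt]

lemma DcondBin_eq_mul_ite_add_mul_ite (c L s : ℝ) :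
    DcondBin c L s = c * (if s ≤ 0 then 1 else 0) + L * (if 0 < s then 1 else 0) := by
  simp only [DcondBin, mul_ite, mul_one, mul_zero, add_comm]

lemma DcondBin_mul (t c L s : ℝ) : DcondBin (t * c) (t * L) s = t * DcondBin c L s := by
  simp only [DcondBin, mul_add, mul_ite, mul_zero]

lemma CcondBin_mul (t c : ℝ) (Φ : ℝ → ℝ) (L s : ℝ) :
    CcondBin (t * c) Φ (t * L) s = t * CcondBin c Φ L s := by
  simp only [CcondBin, mul_add, mul_assoc]

lemma regret_DcondBin_mul (ht : 0 ≤ t) (S : Set ℝ) (c L s : ℝ) :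
    regret S (DcondBin (t * c) (t * L)) s = t * regret S (DcondBin c L) s := by
  rw [← regret_const_mul ht, ← funext (DcondBin_mul t c L)]

lemma regret_CcondBin_mul (ht : 0 ≤ t) (S : Set ℝ) (c : ℝ) (Φ : ℝ → ℝ) (L s : ℝ) :
    regret S (CcondBin (t * c) Φ (t * L)) s = t * regret S (CcondBin c Φ L) s := by
  rw [← regret_const_mul ht, ← funext (CcondBin_mul t c Φ L)]

lemma image_DcondBin (hpos : ∃ s ∈ S, 0 < s) (hnonpos : ∃ s ∈ S, s ≤ 0) (c L : ℝ) :
    DcondBin c L '' S = {L, c} := by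
  obtain ⟨a, ha, ha_pos⟩ := hpos
  obtain ⟨b, hb, hb_nonpos⟩ := hnonpos
  apply Set.Subset.antisymm
  · rintro _ ⟨s, -, rfl⟩
    rcases lt_or_ge 0 s with hs | hs
    · exact .inl (DcondBin_of_pos c L hs)
    · exact .inr (DcondBin_of_nonpos c L hs)
  · rintro _ (rfl | rfl)
    · exact ⟨a, ha, DcondBin_of_pos c _ ha_pos⟩
    · exact ⟨b, hb, DcondBin_of_nonpos _ L hb_nonpos⟩

lemma regret_DcondBin (hpos : ∃ s ∈ S, 0 < s) (hnonpos : ∃ s ∈ S, s ≤ 0) (c L s : ℝ) :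
    regret S (DcondBin c L) s = DcondBin c L s - min L c := by
  rw [regret_eq_sub_sInf_image, image_DcondBin hpos hnonpos, csInf_pair]

lemma DcondBin_sub_min_le (hpos : ∃ s ∈ S, 0 < s) (hnonpos : ∃ s ∈ S, s ≤ 0) {a : ℝ}
    (ha : a ≤ L) (c s : ℝ) :
    DcondBin c L s - min a c ≤ (L - a) + regret S (DcondBin c L) s := by
  have min_le : min L c ≤ min a c + (L - a) := by
    rw [← min_add_add_right, add_sub_cancel]
    exact min_le_min_left L (le_add_of_nonneg_right (sub_nonneg.2 ha))
  rw [regret_DcondBin hpos hnonpos]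
  linarith

lemma bddBelow_image_CcondBin (hΦ : BddBelow (Set.range Φ)) (hc : 0 ≤ c) (hL : 0 ≤ L) (S : Set ℝ) :
    BddBelow (CcondBin c Φ L '' S) := by
  obtain ⟨m, hm⟩ := hΦ
  refine ⟨c * m + L * m, ?_⟩
  rintro _ ⟨s, -, rfl⟩
  exact add_le_add (mul_le_mul_of_nonneg_left (hm ⟨s, rfl⟩) hc)
    (mul_le_mul_of_nonneg_left (hm ⟨-s, rfl⟩) hL)

end ConditionalErrors

/-- Pointwise `Γ`-consistency of the surrogate `Φ` over the scores `S`. The zero-one error and the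
surrogate error under label weights `(p, 1 - p)` are `DcondBin` and `CcondBin` at the costs
`c̄ = p` and `L = 1 - p`. -/
def PointwiseConsistent (Γ : ℝ → ℝ) (Φ : ℝ → ℝ) (S : Set ℝ) : Prop :=
  ∀ p ∈ Set.Icc (0 : ℝ) 1, ∀ s ∈ S,
    regret S (DcondBin p (1 - p)) s ≤ Γ (regret S (CcondBin p Φ (1 - p)) s)

lemma pointwiseConsistent_iff {Γ Φ : ℝ → ℝ} {S : Set ℝ} :
    PointwiseConsistent Γ Φ S ↔ ∀ p ∈ Set.Icc (0 : ℝ) 1, ∀ s ∈ S,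
      (p * (if s ≤ 0 then (1 : ℝ) else 0) + (1 - p) * (if 0 < s then (1 : ℝ) else 0))
          - sInf {v | ∃ s' ∈ S,
              v = p * (if s' ≤ 0 then (1 : ℝ) else 0)
                + (1 - p) * (if 0 < s' then (1 : ℝ) else 0)}
        ≤ Γ ((p * Φ s + (1 - p) * Φ (-s))
            - sInf {v | ∃ s' ∈ S, v = p * Φ s' + (1 - p) * Φ (-s')}) := by
  simp only [PointwiseConsistent, regret, DcondBin_eq_mul_ite_add_mul_ite, CcondBin]

lemma exists_mem_Icc_eq_add_mul {c L : ℝ} (hc : 0 ≤ c) (hL : 0 ≤ L) :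
    ∃ p ∈ Set.Icc (0 : ℝ) 1, c = (c + L) * p ∧ L = (c + L) * (1 - p) := by
  have total_nonneg : 0 ≤ c + L := add_nonneg hc hL
  -- When `c + L = 0` the weight is the junk value `c / 0 = 0`, and both identities read `0 = 0`.
  have mul_weight : (c + L) * (c / (c + L)) = c :=
    mul_div_cancel_of_imp' fun h ↦ by linarith
  refine ⟨c / (c + L), ⟨div_nonneg hc total_nonneg, ?_⟩, mul_weight.symm, ?_⟩
  · exact div_le_one_of_le₀ (le_add_of_nonneg_right hL) total_nonneg
  · rw [mul_sub, mul_weight, mul_one, add_sub_cancel_left]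

lemma mul_mul_rpow_eq {t y : ℝ} (ht : 0 ≤ t) (hy : 0 ≤ y) (α β : ℝ) :
    t * (β * y ^ α) = t ^ (1 - α) * β * (t * y) ^ α := by
  have rpow_split : t ^ (1 - α) * t ^ α = t := by
    rw [← Real.rpow_add' ht (by simp), sub_add_cancel, Real.rpow_one]
  rw [Real.mul_rpow ht hy]
  linear_combination -(β * y ^ α) * rpow_split

namespace PointwiseConsistent

variable {Γ Φ : ℝ → ℝ} {S : Set ℝ} {c L s : ℝ}

lemma regret_DcondBin_mul_le (h : PointwiseConsistent Γ Φ S) {p t : ℝ}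
    (hp : p ∈ Set.Icc (0 : ℝ) 1) (ht : 0 ≤ t) (hs : s ∈ S) :
    regret S (DcondBin (t * p) (t * (1 - p))) s ≤ t * Γ (regret S (CcondBin p Φ (1 - p)) s) := by
  rw [regret_DcondBin_mul ht]
  exact mul_le_mul_of_nonneg_left (h p hp s hs) ht

lemma regret_DcondBin_le_rpow {α β : ℝ} (h : PointwiseConsistent (fun t ↦ β * t ^ α) Φ S)
    (hΦ : BddBelow (Set.range Φ)) (hc : 0 ≤ c) (hL : 0 ≤ L) (hs : s ∈ S) :
    regret S (DcondBin c L) s ≤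
      (c + L) ^ (1 - α) * β * regret S (CcondBin c Φ L) s ^ α := by
  obtain ⟨p, hp, hcp, hLp⟩ := exists_mem_Icc_eq_add_mul hc hL
  set t := c + L
  have ht : 0 ≤ t := add_nonneg hc hL
  have surrogate_nonneg : 0 ≤ regret S (CcondBin p Φ (1 - p)) s :=
    regret_nonneg (bddBelow_image_CcondBin hΦ hp.1 (sub_nonneg.2 hp.2) S) hs
  calc regret S (DcondBin c L) s
      = regret S (DcondBin (t * p) (t * (1 - p))) s := by rw [← hcp, ← hLp]
    _ ≤ t * (β * regret S (CcondBin p Φ (1 - p)) s ^ α) := h.regret_DcondBin_mul_le hp ht hs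
    _ = t ^ (1 - α) * β * (t * regret S (CcondBin p Φ (1 - p)) s) ^ α :=
      mul_mul_rpow_eq ht surrogate_nonneg α β
    _ = t ^ (1 - α) * β * regret S (CcondBin c Φ L) s ^ α := by
      rw [← regret_CcondBin_mul ht, ← hcp, ← hLp]

end PointwiseConsistent

theorem single_expert_two_stage_conditional_bound_general
    {A : Set ℝ} (hA : BddBelow A) {cbar L M : ℝ} (hcbar : 0 ≤ cbar) (hL : L ∈ A) (hL0 : 0 ≤ L)
    (hM : cbar + L ≤ M) {S : Set ℝ} (hSpos : ∃ s ∈ S, 0 < s) (hSnonpos : ∃ s ∈ S, s ≤ 0)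
    {Φ : ℝ → ℝ} (hΦ : BddBelow (Set.range Φ)) {α β : ℝ} (hα : α ≤ 1) (hβ : 0 ≤ β)
    (hcons : PointwiseConsistent (fun t ↦ β * t ^ α) Φ S) {s : ℝ} (hs : s ∈ S) :
    DcondBin cbar L s - min (sInf A) cbar ≤
      (L - sInf A) + M ^ (1 - α) * β * regret S (CcondBin cbar Φ L) s ^ α := by
  have surrogate_nonneg : 0 ≤ regret S (CcondBin cbar Φ L) s :=
    regret_nonneg (bddBelow_image_CcondBin hΦ hcbar hL0 S) hs
  have rpow_le : (cbar + L) ^ (1 - α) ≤ M ^ (1 - α) :=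
    Real.rpow_le_rpow (add_nonneg hcbar hL0) hM (sub_nonneg.2 hα)
  calc DcondBin cbar L s - min (sInf A) cbar
      ≤ (L - sInf A) + regret S (DcondBin cbar L) s :=
        DcondBin_sub_min_le hSpos hSnonpos (csInf_le hA hL) cbar s
    _ ≤ (L - sInf A) + (cbar + L) ^ (1 - α) * β * regret S (CcondBin cbar Φ L) s ^ α := by
        gcongr
        exact hcons.regret_DcondBin_le_rpow hΦ hcbar hL0 hs
    _ ≤ (L - sInf A) + M ^ (1 - α) * β * regret S (CcondBin cbar Φ L) s ^ α := by
        gcongr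

/-- Theorem 5.3, conditional form: single-expert two-stage bound. -/
theorem single_expert_two_stage_conditional_bound
    (lbar cbarmax : ℝ) (hlbar : 0 < lbar) (hcbarmax : 0 < cbarmax)
    (A : Set ℝ) (hA : A.Nonempty) (hAsub : A ⊆ Set.Icc 0 lbar)
    (cbar : ℝ) (hcbar : cbar ∈ Set.Icc 0 cbarmax)
    (S : Set ℝ) (hSpos : ∃ s ∈ S, 0 < s) (hSnonpos : ∃ s ∈ S, s ≤ 0)
    (Φ : ℝ → ℝ) (hΦ0 : ∀ u, 0 ≤ Φ u)
    (hΦ1 : ∀ u : ℝ, (if u ≤ 0 then (1 : ℝ) else 0) ≤ Φ u)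
    (α β : ℝ) (hα : α ∈ Set.Ioc (0 : ℝ) 1) (hβ : 0 < β)
    (hcons : ∀ p ∈ Set.Icc (0 : ℝ) 1, ∀ s ∈ S,
      (p * (if s ≤ 0 then (1 : ℝ) else 0) + (1 - p) * (if 0 < s then (1 : ℝ) else 0))
          - sInf {v | ∃ s' ∈ S,
              v = p * (if s' ≤ 0 then (1 : ℝ) else 0)
                + (1 - p) * (if 0 < s' then (1 : ℝ) else 0)}
        ≤ β * ((p * Φ s + (1 - p) * Φ (-s))
            - sInf {v | ∃ s' ∈ S, v = p * Φ s' + (1 - p) * Φ (-s')}) ^ α)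
    (L : ℝ) (hL : L ∈ A) (s : ℝ) (hs : s ∈ S) :
    DcondBin cbar L s - min (sInf A) cbar ≤
      (L - sInf A)
        + (lbar + cbarmax) ^ (1 - α) * β
          * (CcondBin cbar Φ L s - sInf {v | ∃ s' ∈ S, v = CcondBin cbar Φ L s'}) ^ α :=
  single_expert_two_stage_conditional_bound_general (bddBelow_Icc.mono hAsub) hcbar.1 hL
    (hAsub hL).1 (by linarith [hcbar.2, (hAsub hL).2]) hSpos hSnonpos
    ⟨0, Set.forall_mem_range.2 hΦ0⟩ hα.2 hβ.le (pointwiseConsistent_iff.2 hcons) hs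
end
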